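/- arXiv:2401.16941 — 2 statements merged into one kernel-verified Lean document; each statement's English description precedes it below -/
import Mathlib

section
/- Let L be a field of characteristic 0 and let · be a deformed Laurent series product on L((T^{-1})) satisfying T·a = aT + Σ_{i≤0} δ_i(a)T^i for all a ∈ L (with maps δ_i : L → L, i ≤ 0). Suppose w : L → ℝ ∪ {−∞} is a degree map on L such that w(δ_i(a)) ≤ w(a) for all a ∈ L and all i ≤ 0. Then the set of elements Σ_{i≤n} a_i T^i of L((T^{-1})) such that i ↦ w(a_i) is bounded above forms a subring of L((T^{-1})). -/
noncomputable section

open scoped Classical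

/-- The generalized binomial coefficient `binom n k` for an integer `n` and natural `k`;
it equals `n (n-1) ⋯ (n-k+1) / k!` (an integer). -/
def zbinom (n : ℤ) (k : ℕ) : ℤ :=
  if 0 ≤ n then (n.toNat.choose k : ℤ) else (-1) ^ k * (((k : ℤ) - 1 - n).toNat.choose k : ℤ)

/-- The generalized binomial coefficient `a (a-1) ⋯ (a-k+1) / k!` in a field `K`
(of characteristic zero in all uses). -/
def gbinom {K : Type*} [Field K] (a : K) (k : ℕ) : K :=
  (∏ i ∈ Finset.range k, (a - (i : K))) / (k.factorial : K)

/-- Inverse Laurent series over `L`: formal sums `Σ_{i ∈ ℤ} a_i T^i` whose support is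
bounded above. -/
structure InvLaurent (L : Type*) [Zero L] where
  coeff : ℤ → L
  bdd' : ∃ N : ℤ, ∀ i : ℤ, N < i → coeff i = 0

namespace InvLaurent

variable {L : Type*} [Field L]

@[ext] theorem ext {f g : InvLaurent L} (h : ∀ i, f.coeff i = g.coeff i) : f = g := by
  cases f; cases g
  simp only [mk.injEq]
  funext i; exact h i

instance : Zero (InvLaurent L) := ⟨⟨fun _ => 0, ⟨0, fun _ _ => rfl⟩⟩⟩

instance : Add (InvLaurent L) :=
  ⟨fun f g => ⟨fun i => f.coeff i + g.coeff i, by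
    obtain ⟨N, hN⟩ := f.bdd'; obtain ⟨M, hM⟩ := g.bdd'
    exact ⟨max N M, fun i hi => by
      show f.coeff i + g.coeff i = 0
      rw [hN i (lt_of_le_of_lt (le_max_left _ _) hi),
        hM i (lt_of_le_of_lt (le_max_right _ _) hi), add_zero]⟩⟩⟩

instance : Neg (InvLaurent L) :=
  ⟨fun f => ⟨fun i => -f.coeff i, by
    obtain ⟨N, hN⟩ := f.bdd'
    exact ⟨N, fun i hi => by show -f.coeff i = 0; rw [hN i hi, neg_zero]⟩⟩⟩

@[simp] lemma coeff_zero (i : ℤ) : (0 : InvLaurent L).coeff i = 0 := rfl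
@[simp] lemma coeff_add (f g : InvLaurent L) (i : ℤ) :
    (f + g).coeff i = f.coeff i + g.coeff i := rfl
@[simp] lemma coeff_neg (f : InvLaurent L) (i : ℤ) : (-f).coeff i = -f.coeff i := rfl

instance : AddCommGroup (InvLaurent L) where
  add_assoc f g h := by ext i; simp [add_assoc]
  zero_add f := by ext i; simp
  add_zero f := by ext i; simp
  neg_add_cancel f := by ext i; simp
  add_comm f g := by ext i; simp [add_comm]
  nsmul := nsmulRec
  zsmul := zsmulRec

@[simp] lemma coeff_sub (f g : InvLaurent L) (i : ℤ) :
    (f - g).coeff i = f.coeff i - g.coeff i := by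
  rw [sub_eq_add_neg, coeff_add, coeff_neg, sub_eq_add_neg]

/-- The series `a T^n`. -/
def single (n : ℤ) (a : L) : InvLaurent L :=
  ⟨fun i => if i = n then a else 0, ⟨n, fun i hi => if_neg (by omega)⟩⟩

/-- The series `T^n`. -/
def T (L : Type*) [Field L] (n : ℤ) : InvLaurent L := single n 1

/-- Coefficientwise multiplication by a scalar `b ∈ L` on the left. -/
def lsmul (b : L) (f : InvLaurent L) : InvLaurent L :=
  ⟨fun i => b * f.coeff i, by
    obtain ⟨N, hN⟩ := f.bdd'
    exact ⟨N, fun i hi => by show b * f.coeff i = 0; rw [hN i hi, mul_zero]⟩⟩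

/-- The standard degree map, with values in `ℤ ∪ {-∞}`. -/
def deg (f : InvLaurent L) : WithBot ℤ :=
  if f = 0 then ⊥ else ↑(sSup {i : ℤ | f.coeff i ≠ 0})

lemma deg_eq_bot_iff (f : InvLaurent L) : deg f = ⊥ ↔ f = 0 := by
  unfold deg
  split
  · simpa
  · simp_all

lemma support_nonempty {f : InvLaurent L} (hf : f ≠ 0) :
    {i : ℤ | f.coeff i ≠ 0}.Nonempty := by
  by_contra h
  rw [Set.not_nonempty_iff_eq_empty] at h
  apply hf
  ext i
  have : i ∉ ({i : ℤ | f.coeff i ≠ 0}) := by rw [h]; exact Set.notMem_empty i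
  simpa using this

lemma support_bddAbove (f : InvLaurent L) : BddAbove {i : ℤ | f.coeff i ≠ 0} := by
  obtain ⟨N, hN⟩ := f.bdd'
  exact ⟨N, fun i hi => by by_contra h; exact hi (hN i (by omega))⟩

lemma le_deg {f : InvLaurent L} {i : ℤ} (h : f.coeff i ≠ 0) : (i : WithBot ℤ) ≤ deg f := by
  have hf : f ≠ 0 := by
    intro h0; rw [h0] at h; exact h rfl
  rw [deg, if_neg hf]
  exact_mod_cast le_csSup (support_bddAbove f) h

lemma deg_neg (f : InvLaurent L) : deg (-f) = deg f := by
  unfold deg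
  have h0 : -f = 0 ↔ f = 0 := by
    constructor
    · intro h; ext i
      have := congrArg (fun g => InvLaurent.coeff g i) h
      simp only [coeff_neg, coeff_zero, neg_eq_zero] at this
      simpa using this
    · intro h; rw [h]; ext i; simp
  have hs : {i : ℤ | (-f).coeff i ≠ 0} = {i : ℤ | f.coeff i ≠ 0} := by
    ext i; simp
  rw [hs]
  by_cases h : f = 0
  · rw [if_pos (h0.mpr h), if_pos h]
  · rw [if_neg (fun hh => h (h0.mp hh)), if_neg h]

lemma deg_add_le (f g : InvLaurent L) : deg (f + g) ≤ max (deg f) (deg g) := by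
  by_cases h : f + g = 0
  · rw [(deg_eq_bot_iff _).mpr h]; exact bot_le
  · rw [deg, if_neg h]
    have hne := support_nonempty h
    have : sSup {i : ℤ | (f + g).coeff i ≠ 0} ∈ {i : ℤ | (f + g).coeff i ≠ 0} := by
      obtain ⟨N, hN⟩ := support_bddAbove (f + g)
      obtain ⟨m, hm, hmax⟩ := Int.exists_greatest_of_bdd ⟨N, fun i hi => hN hi⟩ hne
      have : sSup {i : ℤ | (f + g).coeff i ≠ 0} = m :=
        le_antisymm (csSup_le hne hmax) (le_csSup (support_bddAbove _) hm)
      rw [this]; exact hm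
    set m := sSup {i : ℤ | (f + g).coeff i ≠ 0} with hm
    have hc : (f + g).coeff m ≠ 0 := this
    rw [coeff_add] at hc
    rcases (by by_contra hh; push_neg at hh; rw [hh.1, hh.2, add_zero] at hc; exact hc rfl :
        f.coeff m ≠ 0 ∨ g.coeff m ≠ 0) with hf | hg
    · exact le_trans (le_deg hf) (le_max_left _ _)
    · exact le_trans (le_deg hg) (le_max_right _ _)

/-- real-exponential of a degree value: `e^d`, with `e^{-∞} = 0`. -/
def edeg : WithBot ℤ → ℝ
  | ⊥ => 0
  | (n : ℤ) => Real.exp n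

lemma edeg_nonneg (d : WithBot ℤ) : 0 ≤ edeg d := by
  cases d with
  | bot => exact le_refl 0
  | coe n => exact le_of_lt (Real.exp_pos _)

lemma edeg_mono {d d' : WithBot ℤ} (h : d ≤ d') : edeg d ≤ edeg d' := by
  cases d with
  | bot => exact edeg_nonneg d'
  | coe n =>
    cases d' with
    | bot => exact absurd h (by simp)
    | coe m =>
      have : n ≤ m := by exact_mod_cast h
      exact Real.exp_le_exp.mpr (by exact_mod_cast this)

lemma edeg_eq_zero_iff (d : WithBot ℤ) : edeg d = 0 ↔ d = ⊥ := by
  cases d with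
  | bot => simp [edeg]
  | coe n =>
    simp only [edeg]
    constructor
    · intro h; exact absurd h (ne_of_gt (Real.exp_pos _))
    · intro h; exact absurd h (by simp)

noncomputable instance : MetricSpace (InvLaurent L) where
  dist f g := edeg (deg (f - g))
  dist_self f := by
    show edeg (deg (f - f)) = 0
    rw [sub_self, (deg_eq_bot_iff (0 : InvLaurent L)).mpr rfl]
    rfl
  dist_comm f g := by
    show edeg (deg (f - g)) = edeg (deg (g - f))
    have h : g - f = -(f - g) := by abel
    rw [h, deg_neg]
  dist_triangle f g h := by
    show edeg (deg (f - h)) ≤ edeg (deg (f - g)) + edeg (deg (g - h))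
    have h1 : f - h = (f - g) + (g - h) := by abel
    have h2 : deg (f - h) ≤ max (deg (f - g)) (deg (g - h)) := by
      rw [h1]; exact deg_add_le _ _
    calc edeg (deg (f - h)) ≤ edeg (max (deg (f - g)) (deg (g - h))) := edeg_mono h2
      _ ≤ edeg (deg (f - g)) + edeg (deg (g - h)) := by
          rcases max_cases (deg (f - g)) (deg (g - h)) with ⟨hm, _⟩ | ⟨hm, _⟩ <;> rw [hm]
          · exact le_add_of_nonneg_right (edeg_nonneg _)
          · exact le_add_of_nonneg_left (edeg_nonneg _)
  eq_of_dist_eq_zero := by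
    intro f g hd
    have hd' : edeg (deg (f - g)) = 0 := hd
    have : deg (f - g) = ⊥ := (edeg_eq_zero_iff _).mp hd'
    have := (deg_eq_bot_iff _).mp this
    exact sub_eq_zero.mp this

end InvLaurent

open InvLaurent

/-- A deformed Laurent series product on `L((T⁻¹))`:
an associative, distributive, jointly continuous multiplication which restricts to left
scalar multiplication by `L`, satisfies `T^i · T^j = T^{i+j}`, and is compatible with the
standard degree map. -/
structure DeformedProduct (L : Type*) [Field L] where
  mul : InvLaurent L → InvLaurent L → InvLaurent L
  mul_assoc : ∀ f g h, mul (mul f g) h = mul f (mul g h)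
  left_distrib : ∀ f g h, mul f (g + h) = mul f g + mul f h
  right_distrib : ∀ f g h, mul (f + g) h = mul f h + mul g h
  continuous_mul : Continuous fun p : InvLaurent L × InvLaurent L => mul p.1 p.2
  lsmul_eq : ∀ (b : L) (f : InvLaurent L), mul (single 0 b) f = lsmul b f
  T_mul_T : ∀ i j : ℤ, mul (T L i) (T L j) = T L (i + j)
  deg_mul : ∀ f g, deg (mul f g) = deg f + deg g

/-- `HasDelta μ δ` says that `T · a = a T + Σ_{i ≤ 0} δ_i(a) T^i` for all `a ∈ L`. -/
def HasDelta {L : Type*} [Field L] (μ : DeformedProduct L) (δ : ℤ → L → L) : Prop :=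
  ∀ (a : L) (i : ℤ), (μ.mul (T L 1) (single 0 a)).coeff i =
    if i = 1 then a else if i ≤ 0 then δ i a else 0

/-- Composition `δ_{j₁} ∘ ⋯ ∘ δ_{j_k}` along a list `[j₁, …, j_k]`. -/
def dcomp {L : Type*} [Field L] (δ : ℤ → L → L) : List ℤ → L → L
  | [], a => a
  | j :: js, a => δ j (dcomp δ js a)

/-- The Leibniz-type identity (★) for the family `δ_i`, `i ≤ 0`. -/
def LeibnizStar {L : Type*} [Field L] (δ : ℤ → L → L) : Prop :=
  ∀ i : ℤ, i ≤ 0 → ∀ a b : L,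
    δ i (a * b) = a * δ i b + δ i a * b +
      ∑ᶠ p : ℤ × List ℤ,
        if p.1 ≤ 0 ∧ p.2 ≠ [] ∧ (∀ j ∈ p.2, j ≤ 0) ∧
            p.2.sum - (p.2.length : ℤ) + p.1 = i
        then zbinom p.1 p.2.length • (δ p.1 a * dcomp δ p.2 b) else 0

end

/-- A degree map on a ring `R`: a function `w : R → ℝ ∪ {-∞}` with
`w(fg) = w(f) + w(g)`, `w(f+g) ≤ max (w f) (w g)`, and `w f = -∞ ↔ f = 0`. -/
structure IsDegreeMap {R : Type*} [Ring R] (w : R → WithBot ℝ) : Prop where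
  map_mul : ∀ f g, w (f * g) = w f + w g
  add_le : ∀ f g, w (f + g) ≤ max (w f) (w g)
  bot_iff : ∀ f, w f = ⊥ ↔ f = 0

/-!
Multiplication by `T` on the left acts on coefficients by
`(T·h)_k = h_{k-1} + Σ_{j ≥ k} δ_{k-j}(h_j)`. Hence if an additive subgroup `S` of `L` is stable
under all `δ_i` with `i ≤ 0`, left multiplication by `T` preserves the series with coefficients
in `S`. So does left multiplication by `T⁻¹`: solving the formula for `h_{k-1}` recovers the
coefficients of `h` from those of `T·h` by descending recursion, starting above the degree of `h`.
Since `(f·g)_k` is a finite sum of terms `f_i (T^i·g)_k`, coefficients of degree at most `C` and `D`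
produce coefficients of degree at most `C + D`.
-/

namespace InvLaurent

variable {L : Type*} [Field L]

@[simp] lemma coeff_single (n : ℤ) (a : L) (i : ℤ) :
    (single n a).coeff i = if i = n then a else 0 := rfl

@[simp] lemma coeff_T (n i : ℤ) : (T L n).coeff i = if i = n then 1 else 0 := rfl

@[simp] lemma coeff_lsmul (b : L) (f : InvLaurent L) (i : ℤ) :
    (lsmul b f).coeff i = b * f.coeff i := rfl

lemma coeff_T_of_lt {n i : ℤ} (hi : n < i) : (T L n).coeff i = 0 :=
  if_neg (ne_of_gt hi)

/-- The coefficient of `T^k`, as an additive homomorphism. -/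
def coeffHom (k : ℤ) : InvLaurent L →+ L where
  toFun f := f.coeff k
  map_zero' := rfl
  map_add' _ _ := rfl

@[simp] lemma coeffHom_apply (k : ℤ) (f : InvLaurent L) : coeffHom k f = f.coeff k := rfl

lemma deg_le_of_forall_coeff_eq_zero {f : InvLaurent L} {n : ℤ}
    (hf : ∀ i, n < i → f.coeff i = 0) : deg f ≤ n := by
  unfold deg
  split_ifs with hf0
  · exact bot_le
  · exact WithBot.coe_le_coe.mpr <| csSup_le (support_nonempty hf0) fun i hi =>
      not_lt.mp fun hni => hi (hf i hni)

lemma forall_coeff_of_forall_gt {P : L → Prop} (f : InvLaurent L) (zero : P 0)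
    (step : ∀ k, (∀ i, k < i → P (f.coeff i)) → P (f.coeff k)) (k : ℤ) : P (f.coeff k) := by
  by_contra hk
  obtain ⟨N, hN⟩ := f.bdd'
  have bounded : ∀ i, ¬ P (f.coeff i) → i ≤ N := fun i hi =>
    not_lt.mp fun hNi => hi (hN i hNi ▸ zero)
  obtain ⟨m, hm, hmax⟩ := Int.exists_greatest_of_bdd ⟨N, bounded⟩ ⟨k, hk⟩
  exact hm (step m fun i hmi => by_contra fun hi => (hmax i hi).not_gt hmi)

lemma map_eq_sum_single {M : Type*} [AddCommGroup M] (φ : InvLaurent L →+ M) {n N : ℤ}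
    (hφ : ∀ r : InvLaurent L, (∀ i, n ≤ i → r.coeff i = 0) → φ r = 0)
    {f : InvLaurent L} (hf : ∀ i, N < i → f.coeff i = 0) :
    φ f = ∑ i ∈ Finset.Icc n N, φ (single i (f.coeff i)) := by
  rw [← map_sum, ← sub_eq_zero, ← map_sub]
  refine hφ _ fun i hni => ?_
  have coeff_sum : (∑ j ∈ Finset.Icc n N, single j (f.coeff j)).coeff i =
      if i ≤ N then f.coeff i else 0 := by
    rw [← coeffHom_apply, map_sum]
    simp [hni]
  rw [coeff_sub, coeff_sum]
  split_ifs with hiN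
  · exact sub_self _
  · rw [sub_zero, hf i (not_le.mp hiN)]

end InvLaurent

namespace DeformedProduct

open InvLaurent

variable {L : Type*} [Field L] (μ : DeformedProduct L)

lemma coeff_mul_eq_zero {f g : InvLaurent L} {m n k : ℤ} (hf : ∀ i, m < i → f.coeff i = 0)
    (hg : ∀ i, n < i → g.coeff i = 0) (hk : m + n < k) : (μ.mul f g).coeff k = 0 := by
  by_contra hne
  have hle : (k : WithBot ℤ) ≤ (m + n : ℤ) := calc
    (k : WithBot ℤ) ≤ deg (μ.mul f g) := le_deg hne
    _ = deg f + deg g := μ.deg_mul f g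
    _ ≤ m + n :=
      add_le_add (deg_le_of_forall_coeff_eq_zero hf) (deg_le_of_forall_coeff_eq_zero hg)
  exact hk.not_ge (WithBot.coe_le_coe.mp hle)

lemma single_eq_mul_T (i : ℤ) (a : L) : single i a = μ.mul (single 0 a) (T L i) := by
  ext j
  simp [μ.lsmul_eq]

lemma coeff_single_mul (i : ℤ) (a : L) (g : InvLaurent L) (k : ℤ) :
    (μ.mul (single i a) g).coeff k = a * (μ.mul (T L i) g).coeff k := by
  rw [μ.single_eq_mul_T, μ.mul_assoc, μ.lsmul_eq, coeff_lsmul]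

lemma coeff_mul_eq_sum_mul {f g : InvLaurent L} {M N : ℤ} (hf : ∀ i, M < i → f.coeff i = 0)
    (hg : ∀ i, N < i → g.coeff i = 0) (k : ℤ) :
    (μ.mul f g).coeff k =
      ∑ i ∈ Finset.Icc (k - N) M, f.coeff i * (μ.mul (T L i) g).coeff k := by
  have expand := map_eq_sum_single
    ((coeffHom k).comp (AddMonoidHom.mk' (μ.mul · g) fun f₁ f₂ => μ.right_distrib f₁ f₂ g))
    (n := k - N)
    (fun _ hr => μ.coeff_mul_eq_zero (m := k - N - 1) (fun i hi => hr i (by omega)) hg (by omega))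
    hf
  exact expand.trans (Finset.sum_congr rfl fun i _ => μ.coeff_single_mul i _ g k)

lemma coeff_mul_T (f : InvLaurent L) (i k : ℤ) :
    (μ.mul f (T L i)).coeff k = f.coeff (k - i) := by
  obtain ⟨M, hM⟩ := f.bdd'
  rw [μ.coeff_mul_eq_sum_mul hM (fun _ => coeff_T_of_lt) k]
  simp only [μ.T_mul_T, coeff_T, ← sub_eq_iff_eq_add, mul_ite, mul_one, mul_zero,
    Finset.sum_ite_eq, Finset.mem_Icc, le_refl, true_and]
  split_ifs with hki
  · rfl
  · exact (hM _ (not_le.mp hki)).symm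

lemma coeff_mul_single (f : InvLaurent L) (j : ℤ) (a : L) (k : ℤ) :
    (μ.mul f (single j a)).coeff k = (μ.mul f (single 0 a)).coeff (k - j) := by
  rw [μ.single_eq_mul_T, ← μ.mul_assoc, μ.coeff_mul_T]

lemma coeff_mul_eq_sum_coeff_mul_single {f g : InvLaurent L} {M N : ℤ}
    (hf : ∀ i, M < i → f.coeff i = 0) (hg : ∀ i, N < i → g.coeff i = 0) (k : ℤ) :
    (μ.mul f g).coeff k =
      ∑ j ∈ Finset.Icc (k - M) N, (μ.mul f (single 0 (g.coeff j))).coeff (k - j) := by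
  have expand := map_eq_sum_single
    ((coeffHom k).comp (AddMonoidHom.mk' (μ.mul f) (μ.left_distrib f)))
    (n := k - M)
    (fun _ hr => μ.coeff_mul_eq_zero (n := k - M - 1) hf (fun i hi => hr i (by omega)) (by omega))
    hg
  exact expand.trans (Finset.sum_congr rfl fun j _ => μ.coeff_mul_single f j _ k)

lemma T_add_mul (m n : ℤ) (g : InvLaurent L) :
    μ.mul (T L (m + n)) g = μ.mul (T L m) (μ.mul (T L n) g) := by
  rw [← μ.mul_assoc, μ.T_mul_T]

lemma T_zero_mul (g : InvLaurent L) : μ.mul (T L 0) g = g := by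
  ext k
  rw [T, μ.lsmul_eq, coeff_lsmul, one_mul]

variable {μ} {δ : ℤ → L → L} (hδ : HasDelta μ δ)

include hδ

lemma coeff_T_one_mul {h : InvLaurent L} {N : ℤ} (hh : ∀ i, N < i → h.coeff i = 0) (k : ℤ) :
    (μ.mul (T L 1) h).coeff k =
      h.coeff (k - 1) + ∑ j ∈ Finset.Icc k N, δ (k - j) (h.coeff j) := by
  rw [μ.coeff_mul_eq_sum_coeff_mul_single (fun _ => coeff_T_of_lt) hh k]
  rcases lt_or_ge N (k - 1) with hN | hN
  · rw [Finset.Icc_eq_empty (by omega), Finset.Icc_eq_empty (by omega), hh _ hN]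
    simp
  rw [← Finset.insert_Icc_left_eq_Icc_sub_one hN, Finset.sum_insert (by simp)]
  congr 1
  · rw [hδ, if_pos (by omega)]
  · refine Finset.sum_congr rfl fun j hj => ?_
    rw [Finset.mem_Icc] at hj
    rw [hδ, if_neg (by omega), if_pos (by omega)]

variable {S : AddSubgroup L} (hS : ∀ a ∈ S, ∀ i ≤ 0, δ i a ∈ S)

include hS

lemma coeff_T_one_mul_mem_iff {h : InvLaurent L} {k : ℤ} (hh : ∀ i, k ≤ i → h.coeff i ∈ S) :
    (μ.mul (T L 1) h).coeff k ∈ S ↔ h.coeff (k - 1) ∈ S := by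
  obtain ⟨N, hN⟩ := h.bdd'
  rw [coeff_T_one_mul hδ hN]
  refine S.add_mem_cancel_right (S.sum_mem fun j hj => ?_)
  have hkj : k ≤ j := (Finset.mem_Icc.mp hj).1
  exact hS _ (hh j hkj) _ (sub_nonpos.mpr hkj)

lemma coeff_mem_of_coeff_T_one_mul_mem {h : InvLaurent L}
    (hTh : ∀ k, (μ.mul (T L 1) h).coeff k ∈ S) (k : ℤ) : h.coeff k ∈ S := by
  refine forall_coeff_of_forall_gt h S.zero_mem (fun k ih => ?_) k
  simpa using (coeff_T_one_mul_mem_iff hδ hS fun i hi => ih i (by omega)).mp (hTh (k + 1))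

lemma coeff_T_mul_mem {g : InvLaurent L} (hg : ∀ i, g.coeff i ∈ S) (n k : ℤ) :
    (μ.mul (T L n) g).coeff k ∈ S := by
  induction n generalizing k with
  | zero => rw [μ.T_zero_mul]; exact hg k
  | succ n ih =>
    rw [add_comm, μ.T_add_mul]
    exact (coeff_T_one_mul_mem_iff hδ hS fun i _ => ih i).mpr (ih (k - 1))
  | pred n ih =>
    refine coeff_mem_of_coeff_T_one_mul_mem hδ hS (fun k => ?_) k
    rw [← μ.T_add_mul, add_sub_cancel]
    exact ih k

lemma coeff_mul_mem {A : Set L} {B : AddSubgroup L} (hAB : ∀ a ∈ A, ∀ s ∈ S, a * s ∈ B)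
    {f g : InvLaurent L} (hf : ∀ i, f.coeff i ∈ A) (hg : ∀ i, g.coeff i ∈ S) (k : ℤ) :
    (μ.mul f g).coeff k ∈ B := by
  obtain ⟨M, hM⟩ := f.bdd'
  obtain ⟨N, hN⟩ := g.bdd'
  rw [μ.coeff_mul_eq_sum_mul hM hN]
  exact B.sum_mem fun i _ => hAB _ (hf i) _ (coeff_T_mul_mem hδ hS hg i k)

end DeformedProduct

namespace IsDegreeMap

open InvLaurent

section Ring

variable {R : Type*} [Ring R] {w : R → WithBot ℝ} (hw : IsDegreeMap w)

include hw

lemma map_zero : w 0 = ⊥ := (hw.bot_iff 0).mpr rfl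

lemma map_neg (x : R) : w (-x) = w x := by
  have double : w (-x) + w (-x) = w x + w x := by
    rw [← hw.map_mul, ← hw.map_mul, neg_mul_neg]
  by_cases hx : x = 0
  · rw [hx, neg_zero]
  obtain ⟨a, ha⟩ := WithBot.ne_bot_iff_exists.mp (mt (hw.bot_iff x).mp hx)
  obtain ⟨b, hb⟩ := WithBot.ne_bot_iff_exists.mp (mt (hw.bot_iff (-x)).mp (neg_ne_zero.mpr hx))
  rw [← ha, ← hb] at double ⊢
  norm_cast at double ⊢
  linarith

/-- The elements of degree at most `C`: the closed balls of the non-archimedean absolute value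
`x ↦ exp (w x)`. -/
def closedBall (C : WithBot ℝ) : AddSubgroup R where
  carrier := {x | w x ≤ C}
  zero_mem' := hw.map_zero.trans_le bot_le
  add_mem' hx hy := (hw.add_le _ _).trans (max_le hx hy)
  neg_mem' hx := (hw.map_neg _).trans_le hx

lemma mul_mem_closedBall {C D : WithBot ℝ} {x y : R} (hx : x ∈ hw.closedBall C)
    (hy : y ∈ hw.closedBall D) : x * y ∈ hw.closedBall (C + D) :=
  (hw.map_mul x y).trans_le (add_le_add hx hy)

end Ring

variable {L : Type*} [Field L] {w : L → WithBot ℝ} (hw : IsDegreeMap w)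

include hw

/-- The additive group of inverse Laurent series `Σ a_i T^i` for which `i ↦ w (a_i)` is bounded
above by a real number. -/
def boundedSeries : AddSubgroup (InvLaurent L) where
  carrier := {f | ∃ C : ℝ, ∀ i, w (f.coeff i) ≤ C}
  zero_mem' := ⟨0, fun _ => (hw.closedBall _).zero_mem⟩
  add_mem' := by
    rintro f g ⟨C, hC⟩ ⟨D, hD⟩
    refine ⟨max C D, fun i => (hw.add_le _ _).trans ?_⟩
    rw [WithBot.coe_max]
    exact max_le_max (hC i) (hD i)
  neg_mem' := fun ⟨C, hC⟩ => ⟨C, fun i => (hw.closedBall _).neg_mem (hC i)⟩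

lemma single_mem_boundedSeries (n : ℤ) (a : L) : single n a ∈ hw.boundedSeries := by
  refine ⟨(w a).unbotD 0, fun i => ?_⟩
  rw [coeff_single]
  split_ifs
  · exact WithBot.le_coe_unbotD _ _
  · exact hw.map_zero.trans_le bot_le

lemma mul_mem_boundedSeries {μ : DeformedProduct L} {δ : ℤ → L → L} (hδ : HasDelta μ δ)
    (hwδ : ∀ (a : L) (i : ℤ), i ≤ 0 → w (δ i a) ≤ w a) {f g : InvLaurent L}
    (hf : f ∈ hw.boundedSeries) (hg : g ∈ hw.boundedSeries) : μ.mul f g ∈ hw.boundedSeries := by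
  obtain ⟨C, hC⟩ := hf
  obtain ⟨D, hD⟩ := hg
  have ball_stable : ∀ a ∈ hw.closedBall D, ∀ i ≤ 0, δ i a ∈ hw.closedBall D :=
    fun a ha i hi => (hwδ a i hi).trans ha
  exact ⟨C + D, DeformedProduct.coeff_mul_mem hδ ball_stable
    (A := hw.closedBall C) (B := hw.closedBall (C + D))
    (fun _ ha _ hs => hw.mul_mem_closedBall ha hs) hC hD⟩

end IsDegreeMap

theorem deformedProduct_boundedSubring_general {L : Type*} [Field L] {μ : DeformedProduct L}
    {δ : ℤ → L → L} (hδ : HasDelta μ δ) {w : L → WithBot ℝ} (hw : IsDegreeMap w)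
    (hwδ : ∀ (a : L) (i : ℤ), i ≤ 0 → w (δ i a) ≤ w a) :
    InvLaurent.T L 0 ∈ hw.boundedSeries ∧
    ∀ f ∈ hw.boundedSeries, ∀ g ∈ hw.boundedSeries,
      f + g ∈ hw.boundedSeries ∧ -f ∈ hw.boundedSeries ∧ μ.mul f g ∈ hw.boundedSeries :=
  ⟨hw.single_mem_boundedSeries 0 1, fun _ hf _ hg =>
    ⟨add_mem hf hg, neg_mem hf, hw.mul_mem_boundedSeries hδ hwδ hf hg⟩⟩

open InvLaurent in
/-- let `L` be a field of characteristic `0` with a deformed Laurent series product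
on `L((T⁻¹))` satisfying `T·a = aT + Σ_{i≤0} δ_i(a)T^i`, and let `w` be a degree map on `L` with
`w(δ_i(a)) ≤ w(a)` for all `a` and all `i ≤ 0`.  Then the elements `Σ_{i≤n} a_i T^i` with
`i ↦ w(a_i)` bounded above form a subring: they contain `1 = T^0` and are closed under
addition, negation and the deformed product. -/
theorem deformedProduct_boundedSubring (L : Type*) [Field L] [CharZero L]
    (μ : DeformedProduct L) (δ : ℤ → L → L) (hδ : HasDelta μ δ)
    (w : L → WithBot ℝ) (hw : IsDegreeMap w)
    (hwδ : ∀ (a : L) (i : ℤ), i ≤ 0 → w (δ i a) ≤ w a) :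
    T L 0 ∈ {f : InvLaurent L | ∃ C : ℝ, ∀ i : ℤ, w (f.coeff i) ≤ (C : WithBot ℝ)} ∧
    ∀ f ∈ {f : InvLaurent L | ∃ C : ℝ, ∀ i : ℤ, w (f.coeff i) ≤ (C : WithBot ℝ)},
      ∀ g ∈ {f : InvLaurent L | ∃ C : ℝ, ∀ i : ℤ, w (f.coeff i) ≤ (C : WithBot ℝ)},
        f + g ∈ {f : InvLaurent L | ∃ C : ℝ, ∀ i : ℤ, w (f.coeff i) ≤ (C : WithBot ℝ)} ∧
        -f ∈ {f : InvLaurent L | ∃ C : ℝ, ∀ i : ℤ, w (f.coeff i) ≤ (C : WithBot ℝ)} ∧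
        μ.mul f g ∈ {f : InvLaurent L | ∃ C : ℝ, ∀ i : ℤ, w (f.coeff i) ≤ (C : WithBot ℝ)} :=
  deformedProduct_boundedSubring_general hδ hw hwδ
end

section
/- Let L be a field of characteristic 0 and let · be a deformed Laurent series product on D = L((T^{-1})) satisfying T·a = aT + Σ_{i≤0} δ_i(a)T^i for all a ∈ L (with maps δ_i : L → L, i ≤ 0). Assume δ_i ≠ 0 for some i ≤ 0, let i_0 = max{i ≤ 0 : δ_i ≠ 0}, and let K = ∩_{i≤0} Ker(δ_i) (the center of D). Assume K is algebraically closed and Ker(δ_{i_0}) = K. Then D satisfies the commutative centralizer condition: for every z ∈ D with z ∉ K, the centralizer {w ∈ D : z·w = w·z} is a commutative subring of D. -/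
/-!
Commutators lower the degree by at least `1 - i₀ ≥ 1`, and the term of degree `m + n + i₀ - 1` of
`[a T^m + …, b T^n + …]` has coefficient `m a δ(b) - n b δ(a)`, where `δ = δ_{i₀}` is a derivation
of `L`. If `z` has degree `m ≠ 0`, the leading coefficients of elements of the same degree commuting
with `z` therefore all solve the same first-order linear equation, so their ratios lie in
`ker δ = K`.

Let `v` and `w` commute with `z`. Suitable powers of `z` and `w` satisfy
`deg (w^r z^j) = deg (z^i)`, so `w^r z^j - c z^i` has smaller degree for some `c ∈ K`, while its
commutator with `v` is still `[v, w^r] z^j ≈ r [v, w] w^{r-1} z^j`. Hence a bound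
`deg [v, w] ≤ deg v + deg w - k` valid for all such `w` improves to the same bound with `k + 1`,
and `[v, w] = 0`. If `deg z = 0`, either `z` minus its constant term has nonzero degree, or every
nonzero element commuting with `z` has degree `0`, which a nonzero commutator cannot have.
-/

section Commutators

variable {R : Type*} [Ring R]

theorem lie_mul_eq (a b c : R) : ⁅a, b * c⁆ = b * ⁅a, c⁆ + ⁅a, b⁆ * c := by
  simp only [Ring.lie_def]
  noncomm_ring

theorem mul_lie_eq (a b c : R) : ⁅a * b, c⁆ = a * ⁅b, c⁆ + ⁅a, c⁆ * b := by
  simp only [Ring.lie_def]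
  noncomm_ring

end Commutators

attribute [local instance] LieRing.ofAssociativeRing

theorem exists_succ_mul_add_mul_eq_mul {m : ℤ} (hm : m ≠ 0) (q : ℤ) :
    ∃ k i j : ℕ, ((k + 1 : ℕ) : ℤ) * q + j * m = i * m := by
  obtain ⟨k, hk⟩ := Nat.exists_eq_succ_of_ne_zero (Int.natAbs_ne_zero.mpr hm)
  refine ⟨k, (m.sign * q).toNat, (-(m.sign * q)).toNat, ?_⟩
  have hsub := Int.toNat_sub_toNat_neg (m.sign * q)
  have habs : m.sign * m = ((k + 1 : ℕ) : ℤ) := by rw [Int.sign_mul_self_eq_natAbs, hk]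
  linear_combination -m * hsub - q * habs

namespace InvLaurent

variable {L : Type*} [Field L]

theorem single_zero (n : ℤ) : single n (0 : L) = 0 :=
  InvLaurent.ext fun _ => ite_self _

theorem single_add (n : ℤ) (a b : L) : single n (a + b) = single n a + single n b :=
  InvLaurent.ext fun _ => ite_add_zero

theorem lsmul_single (b : L) (n : ℤ) (a : L) : lsmul b (single n a) = single n (b * a) :=
  InvLaurent.ext fun _ => mul_ite_zero ..

theorem deg_le_coe_iff {f : InvLaurent L} {n : ℤ} :
    deg f ≤ n ↔ ∀ i, n < i → f.coeff i = 0 := by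
  refine ⟨fun h i hi => ?_, fun h => ?_⟩
  · by_contra hfi
    exact absurd (WithBot.coe_le_coe.mp ((le_deg hfi).trans h)) (by omega)
  · by_cases hf : f = 0
    · simp [(deg_eq_bot_iff f).mpr hf]
    · rw [deg, if_neg hf, WithBot.coe_le_coe]
      exact csSup_le (support_nonempty hf) fun i hi => not_lt.mp fun hni => hi (h i hni)

theorem coeff_ne_zero_of_deg_eq {f : InvLaurent L} {n : ℤ} (h : deg f = n) : f.coeff n ≠ 0 := by
  have hf : f ≠ 0 := fun h0 => by simp [(deg_eq_bot_iff f).mpr h0] at h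
  rw [deg, if_neg hf, WithBot.coe_inj] at h
  exact h ▸ Int.csSup_mem (support_nonempty hf) (support_bddAbove f)

end InvLaurent

/-- The ring `D` of a deformed product `μ`: inverse Laurent series, as a type depending on `μ` so
that it can carry the multiplication of `μ` as an instance. -/
def DeformedSeries {L : Type*} [Field L] (_μ : DeformedProduct L) : Type _ := InvLaurent L

namespace DeformedSeries

variable {L : Type*} [Field L] {μ : DeformedProduct L}

instance : AddCommGroup (DeformedSeries μ) := inferInstanceAs (AddCommGroup (InvLaurent L))

instance : NonUnitalRing (DeformedSeries μ) where
  mul := μ.mul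
  left_distrib := μ.left_distrib
  right_distrib := μ.right_distrib
  mul_assoc := μ.mul_assoc
  zero_mul f := by
    have h : μ.mul (0 + 0) f = μ.mul 0 f + μ.mul 0 f := μ.right_distrib 0 0 f
    rw [add_zero] at h
    exact left_eq_add.mp h
  mul_zero f := by
    have h : μ.mul f (0 + 0) = μ.mul f 0 + μ.mul f 0 := μ.left_distrib f 0 0
    rw [add_zero] at h
    exact left_eq_add.mp h

/-- The coefficient of `T^i`, as an additive map. -/
def coeff (i : ℤ) : DeformedSeries μ →+ L where
  toFun f := InvLaurent.coeff f i
  map_zero' := rfl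
  map_add' _ _ := rfl

theorem coeff_ext {f g : DeformedSeries μ} (h : ∀ i, coeff i f = coeff i g) : f = g :=
  InvLaurent.ext h

/-- The standard degree map. -/
noncomputable def degree (f : DeformedSeries μ) : WithBot ℤ := InvLaurent.deg (L := L) f

theorem degree_mul (f g : DeformedSeries μ) : degree (f * g) = degree f + degree g :=
  μ.deg_mul f g

theorem degree_eq_bot_iff {f : DeformedSeries μ} : degree f = ⊥ ↔ f = 0 :=
  InvLaurent.deg_eq_bot_iff (L := L) f

theorem exists_degree_eq {f : DeformedSeries μ} (hf : f ≠ 0) : ∃ n : ℤ, degree f = n :=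
  (WithBot.ne_bot_iff_exists.mp (degree_eq_bot_iff.not.mpr hf)).imp fun _ => Eq.symm

theorem coeff_ne_zero_of_degree_eq {f : DeformedSeries μ} {n : ℤ} (h : degree f = n) :
    coeff n f ≠ 0 :=
  InvLaurent.coeff_ne_zero_of_deg_eq (L := L) h

instance : NoZeroDivisors (DeformedSeries μ) where
  eq_zero_or_eq_zero_of_mul_eq_zero {f g} h := by
    simpa only [← degree_eq_bot_iff, degree_mul, WithBot.add_eq_bot] using h

/-! ### Constants and powers of `T` -/

variable (μ) in
/-- The inclusion of the coefficient field as the constant series. It is only a non-unital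
homomorphism because the unit of `DeformedSeries μ` is defined as `C μ 1`. -/
noncomputable def C : L →ₙ+* DeformedSeries μ where
  toFun a := InvLaurent.single (L := L) 0 a
  map_mul' a b := ((μ.lsmul_eq a _).trans (InvLaurent.lsmul_single a 0 b)).symm
  map_zero' := InvLaurent.single_zero 0
  map_add' := InvLaurent.single_add 0

theorem coeff_C_mul (a : L) (f : DeformedSeries μ) (i : ℤ) : coeff i (C μ a * f) = a * coeff i f :=
  congrArg (fun g => InvLaurent.coeff g i) (μ.lsmul_eq a f)

variable (μ) in
/-- The powers `T^n`, `n ∈ ℤ`, of the variable. -/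
noncomputable def T (n : ℤ) : DeformedSeries μ := InvLaurent.T L n

theorem coeff_T (n i : ℤ) : coeff i (T μ n) = if i = n then 1 else 0 := rfl

theorem T_add (m n : ℤ) : T μ (m + n) = T μ m * T μ n := (μ.T_mul_T m n).symm

noncomputable instance : One (DeformedSeries μ) := ⟨C μ 1⟩

theorem C_one : C μ 1 = 1 := rfl

theorem T_zero : T μ 0 = 1 := rfl

protected theorem one_mul (f : DeformedSeries μ) : 1 * f = f :=
  coeff_ext fun i => by rw [← C_one, coeff_C_mul, _root_.one_mul]

protected theorem mul_one (f : DeformedSeries μ) : f * 1 = f := by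
  have one_ne_zero : (1 : DeformedSeries μ) ≠ 0 := fun h => by
    simpa [← T_zero, coeff_T] using congrArg (coeff 0) h
  exact mul_right_cancel₀ one_ne_zero (by rw [mul_assoc, DeformedSeries.one_mul])

noncomputable instance : Ring (DeformedSeries μ) :=
  { (inferInstance : NonUnitalRing (DeformedSeries μ)),
    (inferInstance : One (DeformedSeries μ)) with
    one_mul := DeformedSeries.one_mul
    mul_one := DeformedSeries.mul_one }

/-! ### The degree filtration -/

variable (μ) in
/-- The additive subgroup of series of degree at most `n`, the `n`-th step of the degree
filtration. -/
def degLE (n : ℤ) : AddSubgroup (DeformedSeries μ) where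
  carrier := {f | ∀ i, n < i → coeff i f = 0}
  zero_mem' _ _ := map_zero _
  add_mem' hf hg i hi := by rw [map_add, hf i hi, hg i hi, add_zero]
  neg_mem' hf i hi := by rw [map_neg, hf i hi, neg_zero]

theorem mem_degLE_iff_degree_le {f : DeformedSeries μ} {n : ℤ} : f ∈ degLE μ n ↔ degree f ≤ n :=
  InvLaurent.deg_le_coe_iff.symm

theorem mem_degLE_of_degree_eq {f : DeformedSeries μ} {n : ℤ} (h : degree f = n) :
    f ∈ degLE μ n :=
  mem_degLE_iff_degree_le.mpr h.le

theorem degLE_mono : Monotone (degLE μ) := fun _ _ h _ hf i hi => hf i (h.trans_lt hi)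

theorem eq_zero_of_forall_mem_degLE {f : DeformedSeries μ} (h : ∀ n, f ∈ degLE μ n) : f = 0 :=
  coeff_ext fun i => (h (i - 1) i (by omega)).trans (map_zero _).symm

theorem exists_mem_degLE (f : DeformedSeries μ) : ∃ n, f ∈ degLE μ n := InvLaurent.bdd' f

theorem mul_mem_degLE {f g : DeformedSeries μ} {m n k : ℤ} (hf : f ∈ degLE μ m)
    (hg : g ∈ degLE μ n) (h : m + n ≤ k) : f * g ∈ degLE μ k := by
  refine degLE_mono h ?_
  rw [mem_degLE_iff_degree_le] at *
  rw [degree_mul, WithBot.coe_add]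
  exact add_le_add hf hg

theorem mem_degLE_of_mul_mem_left {f g : DeformedSeries μ} {m n : ℤ} (hg : degree g = n)
    (h : g * f ∈ degLE μ (n + m)) : f ∈ degLE μ m := by
  rw [mem_degLE_iff_degree_le] at *
  rwa [degree_mul, hg, WithBot.coe_add, WithBot.add_le_add_iff_left WithBot.coe_ne_bot] at h

theorem mem_degLE_of_mul_mem_right {f g : DeformedSeries μ} {m n : ℤ} (hg : degree g = n)
    (h : f * g ∈ degLE μ (m + n)) : f ∈ degLE μ m := by
  refine mem_degLE_of_mul_mem_left hg ?_
  rwa [mem_degLE_iff_degree_le, degree_mul, add_comm (degree g), add_comm n, ← degree_mul,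
    ← mem_degLE_iff_degree_le]

theorem mem_degLE_of_succ_nsmul_mem [CharZero L] {f : DeformedSeries μ} {n : ℤ} {k : ℕ}
    (h : (k + 1) • f ∈ degLE μ n) : f ∈ degLE μ n := fun i hi => by
  simpa only [map_nsmul, smul_eq_zero, Nat.add_eq_zero_iff, one_ne_zero, and_false, false_or]
    using h i hi

theorem coeff_eq_of_sub_mem_degLE {f g : DeformedSeries μ} {n : ℤ}
    (h : f - g ∈ degLE μ (n - 1)) : coeff n f = coeff n g :=
  sub_eq_zero.mp ((map_sub (coeff n) f g).symm.trans (h n (by omega)))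

theorem T_mem_degLE (n : ℤ) : T μ n ∈ degLE μ n := fun i hi => by
  rw [coeff_T, if_neg (by omega)]

theorem degree_T (n : ℤ) : degree (T μ n) = n := by
  refine le_antisymm (mem_degLE_iff_degree_le.mp (T_mem_degLE n)) (InvLaurent.le_deg ?_)
  have hcoeff : coeff n (T μ n) ≠ 0 := by simp [coeff_T]
  exact hcoeff

theorem degree_pow {f : DeformedSeries μ} {n : ℤ} (hf : degree f = n) (k : ℕ) :
    degree (f ^ k) = (k * n : ℤ) := by
  induction k with
  | zero => rw [pow_zero, ← T_zero, degree_T, Nat.cast_zero, zero_mul]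
  | succ k ih =>
    rw [pow_succ, degree_mul, ih, hf, ← WithBot.coe_add]
    congr 1
    push_cast
    ring

theorem coeff_zero_C (a : L) : coeff 0 (C μ a) = a := by
  rw [← mul_one (C μ a), coeff_C_mul, ← T_zero, coeff_T, if_pos rfl, mul_one]

theorem C_mem_degLE (a : L) : C μ a ∈ degLE μ 0 := fun _ hi => if_neg hi.ne'

theorem coeff_monomial (a : L) (n i : ℤ) : coeff i (C μ a * T μ n) = if i = n then a else 0 := by
  rw [coeff_C_mul, coeff_T, mul_ite, mul_one, mul_zero]

theorem monomial_mem_degLE (a : L) (n : ℤ) : C μ a * T μ n ∈ degLE μ n :=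
  mul_mem_degLE (C_mem_degLE a) (T_mem_degLE n) (by omega)

theorem sub_leading_mem_degLE {f : DeformedSeries μ} {n : ℤ} (hf : f ∈ degLE μ n) :
    f - C μ (coeff n f) * T μ n ∈ degLE μ (n - 1) := fun i hi => by
  rw [map_sub, coeff_monomial]
  split_ifs with hin
  · rw [hin, sub_self]
  · rw [hf i (by omega), sub_zero]

theorem degLE_induction {p : DeformedSeries μ → Prop} {N n : ℤ}
    (add : ∀ f g, p f → p g → p (f + g)) (monomial : ∀ i ≤ n, ∀ a, p (C μ a * T μ i))
    (of_mem_degLE : ∀ f ∈ degLE μ N, p f) : ∀ f ∈ degLE μ n, p f := by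
  obtain ⟨k, hk⟩ : ∃ k : ℕ, n ≤ N + k := ⟨(n - N).toNat, by omega⟩
  induction k generalizing n with
  | zero => exact fun f hf => of_mem_degLE f (degLE_mono (by simpa using hk) hf)
  | succ k ih =>
    intro f hf
    rw [← add_sub_cancel (C μ (coeff n f) * T μ n) f]
    exact add _ _ (monomial n le_rfl _)
      (ih (n := n - 1) (fun i hi => monomial i (by omega)) (by omega) _ (sub_leading_mem_degLE hf))

/-! ### Commutators of monomials -/

theorem lie_T_add_one_C (n : ℤ) (a : L) :
    ⁅T μ (n + 1), C μ a⁆ = T μ 1 * ⁅T μ n, C μ a⁆ + ⁅T μ 1, C μ a⁆ * T μ n := by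
  rw [add_comm, T_add, mul_lie_eq]

theorem lie_T_zero_C (a : L) : ⁅T μ 0, C μ a⁆ = 0 := by
  rw [T_zero, Ring.lie_def, one_mul, mul_one, sub_self]

theorem lie_T_C_mem_degLE {a : L} {i : ℤ} (h : ⁅T μ 1, C μ a⁆ ∈ degLE μ i) (n : ℤ) :
    ⁅T μ n, C μ a⁆ ∈ degLE μ (n + i - 1) := by
  have lower (k : ℤ) : ⁅T μ 1, C μ a⁆ * T μ k ∈ degLE μ (k + i) :=
    mul_mem_degLE h (T_mem_degLE k) (by omega)
  induction n using Int.induction_on with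
  | zero =>
    rw [lie_T_zero_C]
    exact zero_mem _
  | succ k ih =>
    rw [lie_T_add_one_C]
    exact add_mem (mul_mem_degLE (T_mem_degLE 1) ih (by omega))
      (degLE_mono (by omega) (lower k))
  | pred k ih =>
    have step := lie_T_add_one_C (μ := μ) (-k - 1) a
    rw [sub_add_cancel] at step
    refine mem_degLE_of_mul_mem_left (degree_T 1) ?_
    rw [eq_sub_of_add_eq step.symm]
    exact sub_mem (degLE_mono (by omega) ih) (degLE_mono (by omega) (lower (-k - 1)))

theorem lie_C_C (a b : L) : ⁅C μ a, C μ b⁆ = 0 := by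
  rw [Ring.lie_def, ← map_mul, ← map_mul, mul_comm, sub_self]

theorem lie_monomial_monomial (a b : L) (m n : ℤ) :
    ⁅C μ a * T μ m, C μ b * T μ n⁆ =
      C μ a * ⁅T μ m, C μ b⁆ * T μ n - C μ b * ⁅T μ n, C μ a⁆ * T μ m := by
  have powers : ⁅T μ m, T μ n⁆ = 0 := by
    rw [Ring.lie_def, ← T_add, ← T_add, add_comm, sub_self]
  rw [mul_lie_eq, lie_mul_eq, lie_mul_eq, lie_C_C, powers, ← lie_skew (T μ n) (C μ a)]
  noncomm_ring

theorem commute_C_of_commute_T_one {c : L} (hc : Commute (T μ 1) (C μ c))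
    (f : DeformedSeries μ) : Commute (C μ c) f := by
  have lie_T (n : ℤ) : ⁅T μ n, C μ c⁆ = 0 := eq_zero_of_forall_mem_degLE fun i => by
    have h : ⁅T μ 1, C μ c⁆ ∈ degLE μ (i - n + 1) := by
      rw [commute_iff_lie_eq.mp hc]
      exact zero_mem _
    exact degLE_mono (by omega) (lie_T_C_mem_degLE h n)
  obtain ⟨n, hf⟩ := exists_mem_degLE f
  rw [commute_iff_lie_eq]
  refine eq_zero_of_forall_mem_degLE fun N =>
    degLE_induction (p := fun g => ⁅C μ c, g⁆ ∈ degLE μ N) (N := N) ?_ ?_ ?_ f hf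
  · intro g g' hg hg'
    rw [lie_add]
    exact add_mem hg hg'
  · intro i _ a
    rw [lie_mul_eq, ← lie_skew, lie_T, lie_C_C, neg_zero, mul_zero, zero_mul, add_zero]
    exact zero_mem _
  · intro g hg
    exact sub_mem (mul_mem_degLE (C_mem_degLE c) hg (by omega))
      (mul_mem_degLE hg (C_mem_degLE c) (by omega))

/-! ### The Poisson bracket on symbols -/

variable (μ) in
/-- `AlmostCommutative μ i₀` says that `T · a - a · T` has degree at most `i₀ ≤ 0` for every
constant `a`; the commutator of any two series then has degree at most the sum of their degrees
minus `1 - i₀`. -/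
structure AlmostCommutative (i₀ : ℤ) : Prop where
  nonpos : i₀ ≤ 0
  lie_T_one_C_mem : ∀ a, ⁅T μ 1, C μ a⁆ ∈ degLE μ i₀

namespace AlmostCommutative

variable {i₀ : ℤ} (h : AlmostCommutative μ i₀) {f g : DeformedSeries μ} {m n : ℤ}
include h

theorem lie_T_C_mem (n : ℤ) (a : L) : ⁅T μ n, C μ a⁆ ∈ degLE μ (n + i₀ - 1) :=
  lie_T_C_mem_degLE (h.lie_T_one_C_mem a) n

theorem lie_monomial_mem (a b : L) (m n : ℤ) :
    ⁅C μ a * T μ m, C μ b * T μ n⁆ ∈ degLE μ (m + n + i₀ - 1) := by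
  rw [lie_monomial_monomial]
  exact sub_mem
    (mul_mem_degLE (mul_mem_degLE (C_mem_degLE a) (h.lie_T_C_mem m b) le_rfl) (T_mem_degLE n)
      (by omega))
    (mul_mem_degLE (mul_mem_degLE (C_mem_degLE b) (h.lie_T_C_mem n a) le_rfl) (T_mem_degLE m)
      (by omega))

theorem lie_monomial_right_mem (hf : f ∈ degLE μ m) (b : L) (n : ℤ) :
    ⁅f, C μ b * T μ n⁆ ∈ degLE μ (m + n + i₀ - 1) := by
  refine degLE_induction (p := fun f => ⁅f, C μ b * T μ n⁆ ∈ degLE μ (m + n + i₀ - 1))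
    (N := m + i₀ - 1) ?_ ?_ ?_ f hf
  · intro f₁ f₂ h₁ h₂
    rw [add_lie]
    exact add_mem h₁ h₂
  · exact fun i hi a => degLE_mono (by omega) (h.lie_monomial_mem a b i n)
  · exact fun f hf => sub_mem (mul_mem_degLE hf (monomial_mem_degLE b n) (by omega))
      (mul_mem_degLE (monomial_mem_degLE b n) hf (by omega))

theorem lie_mem (hf : f ∈ degLE μ m) (hg : g ∈ degLE μ n) :
    ⁅f, g⁆ ∈ degLE μ (m + n + i₀ - 1) := by
  refine degLE_induction (p := fun g => ⁅f, g⁆ ∈ degLE μ (m + n + i₀ - 1))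
    (N := n + i₀ - 1) ?_ ?_ ?_ g hg
  · intro g₁ g₂ h₁ h₂
    rw [lie_add]
    exact add_mem h₁ h₂
  · exact fun i hi b => degLE_mono (by omega) (h.lie_monomial_right_mem hf b i)
  · exact fun g hg => sub_mem (mul_mem_degLE hf hg (by omega)) (mul_mem_degLE hg hf (by omega))

theorem coeff_mul {k : ℤ} (hf : f ∈ degLE μ m) (hg : g ∈ degLE μ n) (hk : m + n = k) :
    coeff k (f * g) = coeff m f * coeff n g := by
  subst hk
  set a := coeff m f
  set b := coeff n g
  have expand : f * g - C μ (a * b) * T μ (m + n) =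
      (f - C μ a * T μ m) * g + C μ a * T μ m * (g - C μ b * T μ n) +
        C μ a * ⁅T μ m, C μ b⁆ * T μ n := by
    rw [map_mul, T_add, Ring.lie_def]
    noncomm_ring
  have lower : f * g - C μ (a * b) * T μ (m + n) ∈ degLE μ (m + n - 1) := by
    rw [expand]
    refine add_mem (add_mem ?_ ?_) ?_
    · exact mul_mem_degLE (sub_leading_mem_degLE hf) hg (by omega)
    · exact mul_mem_degLE (monomial_mem_degLE a m) (sub_leading_mem_degLE hg) (by omega)
    · have := h.nonpos
      exact mul_mem_degLE (mul_mem_degLE (C_mem_degLE a) (h.lie_T_C_mem m b) le_rfl)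
        (T_mem_degLE n) (by omega)
  rw [coeff_eq_of_sub_mem_degLE lower, coeff_monomial, if_pos rfl]

/-- The leading coefficient `a ↦ δ_{i₀}(a)` of `T · a - a · T`, as a derivation of `L`. -/
noncomputable def derivation : Derivation ℤ L L :=
  .mk' (AddMonoidHom.mk' (fun a => coeff i₀ ⁅T μ 1, C μ a⁆) fun a b => by
      rw [map_add, lie_add, map_add]).toIntLinearMap fun a b => by
    change coeff i₀ ⁅T μ 1, C μ (a * b)⁆ = a * coeff i₀ ⁅T μ 1, C μ b⁆ + b * coeff i₀ ⁅T μ 1, C μ a⁆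
    rw [map_mul, lie_mul_eq, map_add, coeff_C_mul,
      h.coeff_mul (h.lie_T_one_C_mem a) (C_mem_degLE b) (add_zero i₀), coeff_zero_C, mul_comm b]

theorem derivation_apply (a : L) : h.derivation a = coeff i₀ ⁅T μ 1, C μ a⁆ := rfl

theorem coeff_lie_T_C (n : ℤ) (a : L) :
    coeff (n + i₀ - 1) ⁅T μ n, C μ a⁆ = n * h.derivation a := by
  have step (k : ℤ) : coeff (k + 1 + i₀ - 1) ⁅T μ (k + 1), C μ a⁆ =
      coeff (k + i₀ - 1) ⁅T μ k, C μ a⁆ + h.derivation a := by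
    rw [lie_T_add_one_C, map_add,
      h.coeff_mul (T_mem_degLE 1) (h.lie_T_C_mem k a) (by ring),
      h.coeff_mul (h.lie_T_one_C_mem a) (T_mem_degLE k) (by ring), derivation_apply]
    simp only [coeff_T, if_true, one_mul, mul_one]
  induction n using Int.induction_on with
  | zero => rw [lie_T_zero_C, map_zero, Int.cast_zero, zero_mul]
  | succ k ih =>
    rw [step, ih]
    push_cast
    ring
  | pred k ih =>
    have hstep := step (-k - 1)
    rw [sub_add_cancel, ih] at hstep
    push_cast at hstep ⊢
    linear_combination -hstep

theorem coeff_lie_monomial (a b : L) (m n : ℤ) :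
    coeff (m + n + i₀ - 1) ⁅C μ a * T μ m, C μ b * T μ n⁆ =
      m * a * h.derivation b - n * b * h.derivation a := by
  have term (a b : L) (m n : ℤ) :
      coeff (m + n + i₀ - 1) (C μ a * ⁅T μ m, C μ b⁆ * T μ n) = m * a * h.derivation b := by
    rw [mul_assoc, coeff_C_mul, h.coeff_mul (h.lie_T_C_mem m b) (T_mem_degLE n) (by ring),
      h.coeff_lie_T_C, coeff_T, if_pos rfl]
    ring
  rw [lie_monomial_monomial, map_sub, term, add_comm m n, term]

theorem coeff_lie (hf : f ∈ degLE μ m) (hg : g ∈ degLE μ n) :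
    coeff (m + n + i₀ - 1) ⁅f, g⁆ =
      m * coeff m f * h.derivation (coeff n g) - n * coeff n g * h.derivation (coeff m f) := by
  rw [← h.coeff_lie_monomial]
  refine coeff_eq_of_sub_mem_degLE ?_
  set f₀ := C μ (coeff m f) * T μ m
  set g₀ := C μ (coeff n g) * T μ n
  have split : ⁅f, g⁆ - ⁅f₀, g₀⁆ = ⁅f - f₀, g⁆ + ⁅f₀, g - g₀⁆ := by
    rw [sub_lie, lie_sub]
    abel
  rw [split]
  exact add_mem (degLE_mono (by omega) (h.lie_mem (sub_leading_mem_degLE hf) hg))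
    (degLE_mono (by omega) (h.lie_mem (monomial_mem_degLE _ m) (sub_leading_mem_degLE hg)))

/-! ### Centralizers -/

theorem lie_pow_sub_mem {v w : DeformedSeries μ} {e q : ℤ} (hw : degree w = q)
    (hvw : ⁅v, w⁆ ∈ degLE μ e) (k : ℕ) :
    ⁅v, w ^ (k + 1)⁆ - (k + 1) • (⁅v, w⁆ * w ^ k) ∈ degLE μ (e + k * q - 1) := by
  induction k with
  | zero => simp [zero_mem]
  | succ k ih =>
    have step : ⁅v, w ^ (k + 2)⁆ - (k + 2) • (⁅v, w⁆ * w ^ (k + 1)) =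
        (⁅v, w ^ (k + 1)⁆ - (k + 1) • (⁅v, w⁆ * w ^ k)) * w + ⁅w ^ (k + 1), ⁅v, w⁆⁆ := by
      rw [pow_succ w (k + 1), lie_mul_eq, sub_mul, smul_mul_assoc, mul_assoc _ (w ^ k), ← pow_succ,
        succ_nsmul _ (k + 1), Ring.lie_def (w ^ (k + 1))]
      abel
    have hpow := mem_degLE_of_degree_eq (degree_pow hw (k + 1))
    have := h.nonpos
    rw [step]
    refine add_mem (mul_mem_degLE ih (mem_degLE_of_degree_eq hw) ?_)
      (degLE_mono ?_ (h.lie_mem hpow hvw)) <;>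
    · push_cast
      linarith

theorem lie_mem_of_lie_pow_mem [CharZero L] {v w : DeformedSeries μ} {e q : ℤ} {k : ℕ}
    (hw : degree w = q) (hvw : ⁅v, w⁆ ∈ degLE μ e)
    (hpow : ⁅v, w ^ (k + 1)⁆ ∈ degLE μ (e + k * q - 1)) : ⁅v, w⁆ ∈ degLE μ (e - 1) := by
  have hmul : (k + 1) • (⁅v, w⁆ * w ^ k) ∈ degLE μ (e - 1 + k * q) := by
    have := sub_mem hpow (h.lie_pow_sub_mem hw hvw k)
    rwa [sub_sub_cancel, add_sub_right_comm] at this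
  exact mem_degLE_of_mul_mem_right (degree_pow hw k) (mem_degLE_of_succ_nsmul_mem hmul)

theorem derivation_coeff_div_coeff_eq_zero [CharZero L] {z u y : DeformedSeries μ}
    (hz : degree z = m) (hm : m ≠ 0) (hzu : Commute z u) (hzy : Commute z y)
    (hu : u ∈ degLE μ n) (hy : y ∈ degLE μ n) :
    h.derivation (coeff n u / coeff n y) = 0 := by
  have symbol_eq {x : DeformedSeries μ} (hzx : Commute z x) (hx : x ∈ degLE μ n) :
      m * coeff m z * h.derivation (coeff n x) = n * coeff n x * h.derivation (coeff m z) := by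
    have := h.coeff_lie (mem_degLE_of_degree_eq hz) hx
    rw [commute_iff_lie_eq.mp hzx, map_zero] at this
    exact sub_eq_zero.mp this.symm
  have hmz : (m : L) * coeff m z ≠ 0 :=
    mul_ne_zero (Int.cast_ne_zero.mpr hm) (coeff_ne_zero_of_degree_eq hz)
  rw [Derivation.leibniz_div, smul_eq_zero]
  refine Or.inr (mul_left_cancel₀ hmz ?_)
  simp only [smul_eq_mul]
  linear_combination coeff n y * symbol_eq hzu hu - coeff n u * symbol_eq hzy hy

theorem exists_sub_C_mul_mem [CharZero L] {z u y : DeformedSeries μ}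
    (hz : degree z = m) (hm : m ≠ 0) (hzu : Commute z u) (hzy : Commute z y)
    (hu : u ∈ degLE μ n) (hy : degree y = n) :
    ∃ c, h.derivation c = 0 ∧ u - C μ c * y ∈ degLE μ (n - 1) := by
  have hy' := mem_degLE_of_degree_eq hy
  refine ⟨coeff n u / coeff n y, h.derivation_coeff_div_coeff_eq_zero hz hm hzu hzy hu hy',
    fun i hi => ?_⟩
  rw [map_sub, coeff_C_mul]
  obtain rfl | hlt : n = i ∨ n < i := by omega
  · rw [div_mul_cancel₀ _ (coeff_ne_zero_of_degree_eq hy), sub_self]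
  · rw [hu i hlt, hy' i hlt, mul_zero, sub_zero]

theorem eq_zero_of_commute_of_degree_eq [CharZero L] {z x : DeformedSeries μ}
    (hz : z ∈ degLE μ 0) (hz' : h.derivation (coeff 0 z) ≠ 0) (hzx : Commute z x)
    (hx : degree x = n) : n = 0 := by
  have symbol := h.coeff_lie hz (mem_degLE_of_degree_eq hx)
  rw [commute_iff_lie_eq.mp hzx, map_zero, Int.cast_zero, zero_mul, zero_mul, zero_sub,
    zero_eq_neg] at symbol
  simpa [hz', coeff_ne_zero_of_degree_eq hx] using symbol

theorem commute_of_commute_of_derivation_coeff_zero_ne_zero [CharZero L]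
    {z v w : DeformedSeries μ} (hz : z ∈ degLE μ 0) (hz' : h.derivation (coeff 0 z) ≠ 0)
    (hzv : Commute z v) (hzw : Commute z w) : Commute v w := by
  have mem_degLE_zero {x : DeformedSeries μ} (hzx : Commute z x) : x ∈ degLE μ 0 := by
    by_cases hx : x = 0
    · exact hx ▸ zero_mem _
    obtain ⟨n, hn⟩ := exists_degree_eq hx
    obtain rfl := h.eq_zero_of_commute_of_degree_eq hz hz' hzx hn
    exact mem_degLE_of_degree_eq hn
  rw [commute_iff_lie_eq]
  by_contra hne
  obtain ⟨n, hn⟩ := exists_degree_eq hne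
  have hzvw : Commute z ⁅v, w⁆ := (hzv.mul_right hzw).sub_right (hzw.mul_right hzv)
  obtain rfl := h.eq_zero_of_commute_of_degree_eq hz hz' hzvw hn
  have := h.nonpos
  exact coeff_ne_zero_of_degree_eq hn
    (h.lie_mem (mem_degLE_zero hzv) (mem_degLE_zero hzw) 0 (by omega))

variable (hK : ∀ c, h.derivation c = 0 → ∀ f : DeformedSeries μ, Commute (C μ c) f)
include hK

theorem exists_lie_eq_lie_pow_mul [CharZero L] {z v w : DeformedSeries μ} {q : ℤ}
    (hz : degree z = m) (hm : m ≠ 0) (hzv : Commute z v) (hzw : Commute z w) (hw : degree w = q) :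
    ∃ (u : DeformedSeries μ) (k j : ℕ), Commute z u ∧
      u ∈ degLE μ (((k + 1 : ℕ) : ℤ) * q + j * m - 1) ∧ ⁅v, u⁆ = ⁅v, w ^ (k + 1)⁆ * z ^ j := by
  obtain ⟨k, i, j, hij⟩ := exists_succ_mul_add_mul_eq_mul hm q
  have hz_pow (l : ℕ) : Commute z (z ^ l) := Commute.self_pow z l
  have hzwz : Commute z (w ^ (k + 1) * z ^ j) := (hzw.pow_right _).mul_right (hz_pow j)
  have hdeg : degree (w ^ (k + 1) * z ^ j) = (((k + 1 : ℕ) : ℤ) * q + j * m : ℤ) := by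
    rw [degree_mul, degree_pow hw, degree_pow hz, WithBot.coe_add]
  obtain ⟨c, hc, hmem⟩ := h.exists_sub_C_mul_mem hz hm hzwz (hz_pow i)
    (mem_degLE_of_degree_eq hdeg) (hij ▸ degree_pow hz i)
  refine ⟨_, k, j, hzwz.sub_right ((hK c hc z).symm.mul_right (hz_pow i)), hmem, ?_⟩
  have hvz (l : ℕ) : ⁅v, z ^ l⁆ = 0 := commute_iff_lie_eq.mp (hzv.symm.pow_right l)
  rw [lie_sub, lie_mul_eq, lie_mul_eq, hvz, hvz, commute_iff_lie_eq.mp (hK c hc v).symm]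
  simp only [mul_zero, zero_mul, zero_add, add_zero, sub_zero]

theorem lie_mem_sub_of_commute [CharZero L] {z v : DeformedSeries μ} {p : ℤ}
    (hz : degree z = m) (hm : m ≠ 0) (hzv : Commute z v) (hv : v ∈ degLE μ p) (r : ℕ)
    {w : DeformedSeries μ} {q : ℤ} (hzw : Commute z w) (hw : w ∈ degLE μ q) :
    ⁅v, w⁆ ∈ degLE μ (p + q - r) := by
  induction r generalizing w q with
  | zero =>
    have := h.nonpos
    exact degLE_mono (by omega) (h.lie_mem hv hw)
  | succ r ih =>
    by_cases hw₀ : w = 0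
    · rw [hw₀, lie_zero]
      exact zero_mem _
    obtain ⟨d, hd⟩ := exists_degree_eq hw₀
    obtain ⟨u, k, j, hzu, hu, hvu⟩ := h.exists_lie_eq_lie_pow_mul hK hz hm hzv hzw hd
    have hpow : ⁅v, w ^ (k + 1)⁆ ∈ degLE μ (p + d - r + k * d - 1) := by
      refine mem_degLE_of_mul_mem_right (degree_pow hz j) ?_
      rw [← hvu]
      refine degLE_mono (le_of_eq ?_) (ih hzu hu)
      push_cast
      ring
    have hdq : d ≤ q := by
      rw [mem_degLE_iff_degree_le, hd] at hw
      exact WithBot.coe_le_coe.mp hw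
    exact degLE_mono (by push_cast; omega)
      (h.lie_mem_of_lie_pow_mem hd (ih hzw (mem_degLE_of_degree_eq hd)) hpow)

theorem commute_of_commute_of_degree_ne_zero [CharZero L] {z v w : DeformedSeries μ}
    (hz : degree z = m) (hm : m ≠ 0) (hzv : Commute z v) (hzw : Commute z w) : Commute v w := by
  obtain ⟨p, hv⟩ := exists_mem_degLE v
  obtain ⟨q, hw⟩ := exists_mem_degLE w
  rw [commute_iff_lie_eq]
  exact eq_zero_of_forall_mem_degLE fun n => degLE_mono (by omega)
    (h.lie_mem_sub_of_commute hK hz hm hzv hv (p + q - n).toNat hzw hw)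

theorem commute_of_commute [CharZero L] {z v w : DeformedSeries μ}
    (hz : ∀ c, h.derivation c = 0 → z ≠ C μ c) (hzv : Commute z v) (hzw : Commute z w) :
    Commute v w := by
  have hz₀ : z ≠ 0 := map_zero (C μ) ▸ hz 0 (map_zero _)
  obtain ⟨m, hm⟩ := exists_degree_eq hz₀
  by_cases hm₀ : m ≠ 0
  · exact h.commute_of_commute_of_degree_ne_zero hK hm hm₀ hzv hzw
  obtain rfl := not_not.mp hm₀
  have hz_mem := mem_degLE_of_degree_eq hm
  by_cases hc : h.derivation (coeff 0 z) = 0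
  · set c := coeff 0 z
    obtain ⟨n, hn⟩ := exists_degree_eq (sub_ne_zero.mpr (hz c hc))
    have hlower : z - C μ c ∈ degLE μ (0 - 1) := by
      simpa only [T_zero, mul_one] using sub_leading_mem_degLE hz_mem
    have hn₀ : n ≠ 0 := by
      rintro rfl
      exact coeff_ne_zero_of_degree_eq hn (hlower 0 (by omega))
    exact h.commute_of_commute_of_degree_ne_zero hK hn hn₀ (hzv.sub_left (hK c hc v))
      (hzw.sub_left (hK c hc w))
  · exact h.commute_of_commute_of_derivation_coeff_zero_ne_zero hz_mem hc hzv hzw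

end AlmostCommutative

end DeformedSeries

namespace HasDelta

open DeformedSeries

variable {L : Type*} [Field L] {μ : DeformedProduct L} {δ : ℤ → L → L} (hδ : HasDelta μ δ)
include hδ

theorem coeff_lie_T_one_C (a : L) (i : ℤ) :
    coeff i ⁅T μ 1, C μ a⁆ = if i ≤ 0 then δ i a else 0 := by
  have hT : coeff i (T μ 1 * C μ a) =
      if i = 1 then a else if i ≤ 0 then δ i a else 0 := hδ a i
  rw [Ring.lie_def, map_sub, hT, coeff_monomial]
  by_cases hi : i = 1 <;> simp [hi]

theorem commute_T_one_C {c : L} (hc : ∀ i ≤ 0, δ i c = 0) :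
    Commute (T μ 1) (C μ c) :=
  commute_iff_lie_eq.mpr <| coeff_ext fun i => by
    rw [hδ.coeff_lie_T_one_C, map_zero, ite_eq_right_iff]
    exact hc i

theorem almostCommutative {i₀ : ℤ} (hi₀ : i₀ ≤ 0) (hi₀max : ∀ i, i₀ < i → i ≤ 0 → ∀ a, δ i a = 0) :
    AlmostCommutative μ i₀ where
  nonpos := hi₀
  lie_T_one_C_mem a i hi := by
    rw [hδ.coeff_lie_T_one_C, ite_eq_right_iff]
    exact fun hi' => hi₀max i hi hi' a

theorem derivation_eq {i₀ : ℤ} (h : AlmostCommutative μ i₀) (a : L) :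
    h.derivation a = δ i₀ a := by
  rw [h.derivation_apply, hδ.coeff_lie_T_one_C, if_pos h.nonpos]

end HasDelta

open InvLaurent in
theorem deformedProduct_ccc_general {L : Type*} [Field L] [CharZero L]
    {μ : DeformedProduct L} {δ : ℤ → L → L} (hδ : HasDelta μ δ) {i₀ : ℤ} (hi₀ : i₀ ≤ 0)
    (hi₀max : ∀ i : ℤ, i₀ < i → i ≤ 0 → ∀ a : L, δ i a = 0)
    (hker : {b : L | δ i₀ b = 0} = {b : L | ∀ i : ℤ, i ≤ 0 → δ i b = 0})
    {z : InvLaurent L} (hz : ¬ ∃ b ∈ {b : L | ∀ i : ℤ, i ≤ 0 → δ i b = 0}, z = single 0 b)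
    {w₁ w₂ : InvLaurent L} (hw₁ : μ.mul z w₁ = μ.mul w₁ z) (hw₂ : μ.mul z w₂ = μ.mul w₂ z) :
    μ.mul w₁ w₂ = μ.mul w₂ w₁ := by
  have h := hδ.almostCommutative hi₀ hi₀max
  have forall_δ_eq_zero {c : L} (hc : h.derivation c = 0) : ∀ i ≤ 0, δ i c = 0 :=
    hker.subset ((hδ.derivation_eq h c).symm.trans hc)
  have hK (c : L) (hc : h.derivation c = 0) (f : DeformedSeries μ) :
      Commute (DeformedSeries.C μ c) f :=
    DeformedSeries.commute_C_of_commute_T_one (hδ.commute_T_one_C (forall_δ_eq_zero hc)) f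
  exact h.commute_of_commute hK (z := z) (v := w₁) (w := w₂)
    (fun c hc hzc => hz ⟨c, forall_δ_eq_zero hc, hzc⟩) hw₁ hw₂

open InvLaurent in
/-- let `L` have characteristic `0`, let `·` be a deformed Laurent series product
on `D = L((T⁻¹))` with `T·a = aT + Σ_{i≤0} δ_i(a)T^i`, with some `δ_i ≠ 0`, let `i₀` be the
largest `i ≤ 0` with `δ_i ≠ 0`, and let `K = ∩_{i≤0} Ker δ_i` (the center of `D`).  If `K` is
algebraically closed and `Ker δ_{i₀} = K`, then `D` satisfies the commutative centralizer
condition: for every `z ∈ D \ K`, any two elements commuting with `z` commute with each other. -/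
theorem deformedProduct_ccc (L : Type*) [Field L] [CharZero L]
    (μ : DeformedProduct L) (δ : ℤ → L → L) (hδ : HasDelta μ δ)
    (i₀ : ℤ) (hi₀ : i₀ ≤ 0) (hi₀ne : ∃ a : L, δ i₀ a ≠ 0)
    (hi₀max : ∀ i : ℤ, i₀ < i → i ≤ 0 → ∀ a : L, δ i a = 0)
    (F : Subfield L) (hF : (F : Set L) = {b : L | ∀ i : ℤ, i ≤ 0 → δ i b = 0})
    (hAC : IsAlgClosed F)
    (hker : {b : L | δ i₀ b = 0} = {b : L | ∀ i : ℤ, i ≤ 0 → δ i b = 0}) :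
    ∀ z : InvLaurent L,
      (¬ ∃ b ∈ {b : L | ∀ i : ℤ, i ≤ 0 → δ i b = 0}, z = single 0 b) →
      ∀ w₁ w₂ : InvLaurent L,
        μ.mul z w₁ = μ.mul w₁ z → μ.mul z w₂ = μ.mul w₂ z →
        μ.mul w₁ w₂ = μ.mul w₂ w₁ :=
  fun _ hz _ _ => deformedProduct_ccc_general hδ hi₀ hi₀max hker hz
end
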